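/- For an instance J with agreeable deadlines, the intervals associated with the Greedy groups triple-overlap nowhere: if G_1, …, G_p are the groups determined by the flush times and I_i = [min_{j∈G_i} r_j, max_{j∈G_i} d_j], then I_i ∩ I_{i′} = ∅ whenever i′ ≥ i + 2; equivalently, at most two of the intervals I_1, …, I_p contain any given point in time. -/

import Mathlib

structure SchedInstance where
  jobs : Finset ℕ
  r : ℕ → ℤ
  d : ℕ → ℤ
  window : ∀ j ∈ jobs, r j ≤ d j

def Agreeable (P : SchedInstance) : Prop :=
  ∀ j ∈ P.jobs, ∀ j' ∈ P.jobs, P.r j < P.r j' → P.d j ≤ P.d j'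

/-!
The next flush time `τ (i + 1)` is the deadline of a job `k` released after `τ i`. A job of group
`i` is released by `τ i`, hence before `k`, so agreeability bounds its deadline by `τ (i + 1)`.
A job of group `i' ≥ i + 2` is released after `τ (i' - 1) ≥ τ (i + 1)`. So `τ (i + 1)` separates
the two groups, and only group `i + 1` can bridge them.
-/

section Preorder

variable {ι α : Type*} [Preorder α] {J : Set ι} {r d : ι → α} {τ : ℕ → α} {p i i' : ℕ}

/-- The times `τ 0, …, τ (p - 1)` are separated by windows of the job set `J`: between any two
consecutive ones lies the whole window `[r k, d k]` of some job, the left end excluded. Flush times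
are of this kind, with `d k = τ (i + 1)`. -/
def SeparatedByWindows (J : Set ι) (r d : ι → α) (τ : ℕ → α) (p : ℕ) : Prop :=
  ∀ i, i + 1 < p → ∃ k ∈ J, τ i < r k ∧ d k ≤ τ (i + 1)

/-- The groups into which the times `τ` divide the jobs of `J` by release time. The paper's
`G_{i+1}` and `τ_{i+1}` are `greedyGroup J r τ i` and `τ i`. -/
def greedyGroup (J : Set ι) (r : ι → α) (τ : ℕ → α) : ℕ → Set ι
  | 0 => {j ∈ J | r j ≤ τ 0}
  | i + 1 => {j ∈ J | τ i < r j ∧ r j ≤ τ (i + 1)}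

theorem separatedByWindows_of_isLeast
    (hτ : ∀ i, i + 1 < p → IsLeast {x | ∃ j ∈ J, τ i < r j ∧ d j = x} (τ (i + 1))) :
    SeparatedByWindows J r d τ p := fun i hi =>
  let ⟨k, hk, hτr, hdτ⟩ := (hτ i hi).1
  ⟨k, hk, hτr, hdτ.le⟩

theorem coe_eq_greedyGroup [DecidableLE α] [DecidableLT α] {J : Finset ι} {G : ℕ → Finset ι}
    (hG0 : G 0 = J.filter fun j => r j ≤ τ 0)
    (hGstep : ∀ i, i + 1 < p → G (i + 1) = J.filter fun j => τ i < r j ∧ r j ≤ τ (i + 1)) :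
    ∀ i < p, (G i : Set ι) = greedyGroup J r τ i
  | 0, _ => by rw [hG0, Finset.coe_filter]; rfl
  | i + 1, hi => by rw [hGstep i hi, Finset.coe_filter]; rfl

theorem greedyGroup_subset_release_le : greedyGroup J r τ i ⊆ {j ∈ J | r j ≤ τ i} := by
  cases i with
  | zero => exact subset_rfl
  | succ i => exact fun _ hj => ⟨hj.1, hj.2.2⟩

theorem SeparatedByWindows.strictMonoOn (hτ : SeparatedByWindows J r d τ p)
    (hwindow : ∀ j ∈ J, r j ≤ d j) : StrictMonoOn τ (Set.Iio p) := by
  refine strictMonoOn_of_lt_succ Set.ordConnected_Iio fun i _ _ hi => ?_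
  obtain ⟨k, hk, hτr, hdτ⟩ := hτ i hi
  exact hτr.trans_le ((hwindow k hk).trans hdτ)

theorem SeparatedByWindows.deadline_le (hτ : SeparatedByWindows J r d τ p)
    (hagree : MonovaryOn d r J) (hi : i + 1 < p) {j : ι} (hj : j ∈ greedyGroup J r τ i) :
    d j ≤ τ (i + 1) := by
  obtain ⟨k, hk, hτr, hdτ⟩ := hτ i hi
  obtain ⟨hjJ, hrτ⟩ := greedyGroup_subset_release_le hj
  exact (hagree hjJ hk (hrτ.trans_lt hτr)).trans hdτ

theorem SeparatedByWindows.deadline_lt_release (hτ : SeparatedByWindows J r d τ p)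
    (hwindow : ∀ j ∈ J, r j ≤ d j) (hagree : MonovaryOn d r J) (hi' : i' < p) (hii' : i + 2 ≤ i')
    {j j' : ι} (hj : j ∈ greedyGroup J r τ i) (hj' : j' ∈ greedyGroup J r τ i') :
    d j < r j' := by
  obtain ⟨m, rfl⟩ : ∃ m, i' = m + 1 := ⟨i' - 1, by omega⟩
  have hi : i + 1 < p := by omega
  have hm : m < p := by omega
  calc
    d j ≤ τ (i + 1) := hτ.deadline_le hagree hi hj
    _ ≤ τ m := (hτ.strictMonoOn hwindow).monotoneOn hi hm (by omega)
    _ < r j' := hj'.2.1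

end Preorder

section LinearOrder

variable {ι α : Type*} [LinearOrder α]

theorem disjoint_Icc_sup'_Icc_inf' {κ : Type*} {s : Finset ι} {t : Finset κ} {f : ι → α}
    {g : κ → α} (hs : s.Nonempty) (ht : t.Nonempty) (h : ∀ x ∈ s, ∀ y ∈ t, f x < g y) (a b : α) :
    Disjoint (Set.Icc a (s.sup' hs f)) (Set.Icc (t.inf' ht g) b) := by
  have hlt : s.sup' hs f < t.inf' ht g :=
    (Finset.sup'_lt_iff hs).2 fun x hx => (Finset.lt_inf'_iff ht).2 (h x hx)
  exact (Set.Iic_disjoint_Ici.2 hlt.not_ge).mono Set.Icc_subset_Iic_self Set.Icc_subset_Ici_self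

theorem greedy_intervals_no_triple_overlap_general {J : Set ι} {r d : ι → α} {τ : ℕ → α} {p : ℕ}
    {G : ℕ → Finset ι} (hwindow : ∀ j ∈ J, r j ≤ d j) (hagree : MonovaryOn d r J)
    (hτ : SeparatedByWindows J r d τ p) (hG : ∀ i < p, ↑(G i) ⊆ greedyGroup J r τ i)
    {i i' : ℕ} (hi' : i' < p) (hii' : i + 2 ≤ i') (h1 : (G i).Nonempty) (h2 : (G i').Nonempty) :
    Disjoint (Set.Icc ((G i).inf' h1 r) ((G i).sup' h1 d))
      (Set.Icc ((G i').inf' h2 r) ((G i').sup' h2 d)) :=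
  disjoint_Icc_sup'_Icc_inf' h1 h2
    (fun _ hj _ hj' => hτ.deadline_lt_release hwindow hagree hi' hii'
      (hG i (by omega) hj) (hG i' hi' hj')) _ _

end LinearOrder

theorem Agreeable.monovaryOn {P : SchedInstance} (h : Agreeable P) : MonovaryOn P.d P.r P.jobs :=
  fun j hj j' hj' => h j hj j' hj'

/-- with agreeable deadlines, the intervals
`I i = [min_{j ∈ G i} r j, max_{j ∈ G i} d j]` associated with the Greedy groups
triple-overlap nowhere: `I i ∩ I i' = ∅` whenever `i' ≥ i + 2`. -/
theorem greedy_intervals_no_triple_overlap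
    (P : SchedInstance) (hagree : Agreeable P) (hne : P.jobs.Nonempty)
    (p : ℕ) (hp : 0 < p) (τ : ℕ → ℤ) (G : ℕ → Finset ℕ)
    (hτ0 : IsLeast {x : ℤ | ∃ j ∈ P.jobs, P.d j = x} (τ 0))
    (hτstep : ∀ i, i + 1 < p →
      IsLeast {x : ℤ | ∃ j ∈ P.jobs, τ i < P.r j ∧ P.d j = x} (τ (i + 1)))
    (hlast : ∀ j ∈ P.jobs, P.r j ≤ τ (p - 1))
    (hτmono : ∀ i, i + 1 < p → τ i < τ (i + 1))
    (hG0 : G 0 = P.jobs.filter fun j => P.r j ≤ τ 0)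
    (hGstep : ∀ i, i + 1 < p →
      G (i + 1) = P.jobs.filter fun j => τ i < P.r j ∧ P.r j ≤ τ (i + 1)) :
    ∀ i i' : ℕ, i' < p → i + 2 ≤ i' →
      ∀ (h1 : (G i).Nonempty) (h2 : (G i').Nonempty),
        Set.Icc ((G i).inf' h1 P.r) ((G i).sup' h1 P.d) ∩
            Set.Icc ((G i').inf' h2 P.r) ((G i').sup' h2 P.d) = ∅ := fun _ _ hi' hii' h1 h2 =>
  (greedy_intervals_no_triple_overlap_general P.window hagree.monovaryOn
    (separatedByWindows_of_isLeast hτstep) (fun i hi => (coe_eq_greedyGroup hG0 hGstep i hi).le)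
    hi' hii' h1 h2).inter_eq
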